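/- arXiv:2412.16273 — 5 statements merged into one kernel-verified Lean document; each statement's English description precedes it below -/
import Mathlib

section
/- Let (𝔤,[-,-]₁,[-,-]₂) be a compatible Lie algebra with a representation (ρ,μ,V), and let T : V → 𝔤 be an anti-O-operator associated to (ρ,μ,V). Define bilinear operations on V by u∘v = −ρ(T(u))v and u∗v = −μ(T(u))v. Then for all u,v,w ∈ V the identity u∘(v∗w) + u∗(v∘w) − v∘(u∗w) − v∗(u∘w) = [v,u]₂∘w + [v,u]₁∗w holds, where [u,v]₁ = u∘v − v∘u and [u,v]₂ = u∗v − v∗u. -/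
/-- A bilinear operation is a Lie bracket. -/
def IsLieBr {g : Type*} [AddCommGroup g] [Module ℂ g]
    (b : g →ₗ[ℂ] g →ₗ[ℂ] g) : Prop :=
  (∀ x y : g, b x y = -b y x) ∧
  (∀ x y z : g, b (b x y) z + b (b y z) x + b (b z x) y = 0)

/-- `r` is a representation of the Lie bracket `b` on `V`. -/
def IsRep {g V : Type*} [AddCommGroup g] [Module ℂ g] [AddCommGroup V] [Module ℂ V]
    (b : g →ₗ[ℂ] g →ₗ[ℂ] g) (r : g →ₗ[ℂ] V →ₗ[ℂ] V) : Prop :=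
  ∀ x y : g, r (b x y) = r x ∘ₗ r y - r y ∘ₗ r x

/-- `T` is an anti-O-operator of the Lie algebra `(g, b)` associated to the
representation `r`. -/
def IsAntiO {g V : Type*} [AddCommGroup g] [Module ℂ g] [AddCommGroup V] [Module ℂ V]
    (b : g →ₗ[ℂ] g →ₗ[ℂ] g) (r : g →ₗ[ℂ] V →ₗ[ℂ] V) (T : V →ₗ[ℂ] g) : Prop :=
  ∀ u v : V, b (T u) (T v) = T (r (T v) u - r (T u) v)

/-!
The map `T` carries the commutators of `∘` and `∗` to the brackets `b₁` and `b₂`. The right-hand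
side is therefore `-(ρ (b₂ x y) + μ (b₁ x y)) w` at `x = T v`, `y = T u`, and the identity is the
mixed compatibility condition of `(ρ, μ)`, the `k₁ k₂`-coefficient of the representation condition
for the pencil `k₁ ρ + k₂ μ`.
-/

lemma IsRep.mixed_of_add {g V : Type*} [AddCommGroup g] [Module ℂ g]
    [AddCommGroup V] [Module ℂ V] {b₁ b₂ : g →ₗ[ℂ] g →ₗ[ℂ] g} {ρ μ : g →ₗ[ℂ] V →ₗ[ℂ] V}
    (hρ : IsRep b₁ ρ) (hμ : IsRep b₂ μ) (hadd : IsRep (b₁ + b₂) (ρ + μ)) (x y : g) :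
    ρ (b₂ x y) + μ (b₁ x y) = ρ x ∘ₗ μ y - ρ y ∘ₗ μ x + (μ x ∘ₗ ρ y - μ y ∘ₗ ρ x) := by
  have hsum := hadd x y
  simp only [LinearMap.add_apply, map_add, hρ x y, hμ x y, LinearMap.add_comp,
    LinearMap.comp_add] at hsum
  linear_combination (norm := abel) hsum

section

variable {R g V : Type*} [CommRing R] [AddCommGroup g] [Module R g] [AddCommGroup V] [Module R V]

lemma antiO_map_commutator {b : g →ₗ[R] g →ₗ[R] g} {r : g →ₗ[R] V →ₗ[R] V} {T : V →ₗ[R] g}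
    (hT : ∀ u v : V, b (T u) (T v) = T (r (T v) u - r (T u) v))
    {m : V → V → V} (hm : ∀ u v : V, m u v = -(r (T u) v)) (u v : V) :
    T (m u v - m v u) = b (T u) (T v) := by
  rw [hT, hm, hm, neg_sub_neg]

theorem antiO_induced_mixed_identity_general (b₁ b₂ : g →ₗ[R] g →ₗ[R] g)
    (ρ μ : g →ₗ[R] V →ₗ[R] V)
    (hmixed : ∀ x y : g,
      ρ (b₂ x y) + μ (b₁ x y) = ρ x ∘ₗ μ y - ρ y ∘ₗ μ x + (μ x ∘ₗ ρ y - μ y ∘ₗ ρ x))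
    (T : V →ₗ[R] g)
    (hT₁ : ∀ u v : V, b₁ (T u) (T v) = T (ρ (T v) u - ρ (T u) v))
    (hT₂ : ∀ u v : V, b₂ (T u) (T v) = T (μ (T v) u - μ (T u) v))
    (c s : V → V → V)
    (hc : ∀ u v : V, c u v = -(ρ (T u) v))
    (hs : ∀ u v : V, s u v = -(μ (T u) v)) (u v w : V) :
    c u (s v w) + s u (c v w) - c v (s u w) - s v (c u w)
      = c (s v u - s u v) w + s (c v u - c u v) w := by
  have hmixed_w : ρ (b₂ (T v) (T u)) w + μ (b₁ (T v) (T u)) w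
      = ρ (T v) (μ (T u) w) - ρ (T u) (μ (T v) w)
        + (μ (T v) (ρ (T u) w) - μ (T u) (ρ (T v) w)) :=
    LinearMap.congr_fun (hmixed (T v) (T u)) w
  calc c u (s v w) + s u (c v w) - c v (s u w) - s v (c u w)
      = ρ (T u) (μ (T v) w) + μ (T u) (ρ (T v) w)
          - ρ (T v) (μ (T u) w) - μ (T v) (ρ (T u) w) := by
        simp only [hc, hs, map_neg, neg_neg]
    _ = -(ρ (b₂ (T v) (T u)) w + μ (b₁ (T v) (T u)) w) := by
        rw [hmixed_w]
        abel
    _ = -(ρ (T (s v u - s u v)) w) + -(μ (T (c v u - c u v)) w) := by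
        rw [antiO_map_commutator hT₂ hs, antiO_map_commutator hT₁ hc, neg_add]
    _ = c (s v u - s u v) w + s (c v u - c u v) w := by
        rw [hc (s v u - s u v), hs (c v u - c u v)]

end

/-- Let `(g,b₁,b₂)` be a compatible Lie algebra, `(ρ,μ,V)` a
representation, and `T : V → g` an anti-O-operator. With `u∘v = −ρ(T u)v` and
`u∗v = −μ(T u)v`, the identity
`u∘(v∗w) + u∗(v∘w) − v∘(u∗w) − v∗(u∘w) = [v,u]₂∘w + [v,u]₁∗w` holds on `V`. -/
theorem antiO_induced_mixed_identity {g V : Type*} [AddCommGroup g] [Module ℂ g]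
    [AddCommGroup V] [Module ℂ V]
    (b₁ b₂ : g →ₗ[ℂ] g →ₗ[ℂ] g)
    (hcompat : ∀ k₁ k₂ : ℂ, IsLieBr (k₁ • b₁ + k₂ • b₂))
    (ρ μ : g →ₗ[ℂ] V →ₗ[ℂ] V)
    (hrep : ∀ k₁ k₂ : ℂ, IsRep (k₁ • b₁ + k₂ • b₂) (k₁ • ρ + k₂ • μ))
    (T : V →ₗ[ℂ] g)
    (hT : ∀ k₁ k₂ : ℂ, IsAntiO (k₁ • b₁ + k₂ • b₂) (k₁ • ρ + k₂ • μ) T)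
    (c s : V → V → V)
    (hc : ∀ u v : V, c u v = -(ρ (T u) v))
    (hs : ∀ u v : V, s u v = -(μ (T u) v)) :
    ∀ u v w : V,
      c u (s v w) + s u (c v w) - c v (s u w) - s v (c u w)
        = c (s v u - s u v) w + s (c v u - c u v) w := by
  have hρ : IsRep b₁ ρ := by simpa using hrep 1 0
  have hμ : IsRep b₂ μ := by simpa using hrep 0 1
  have hadd : IsRep (b₁ + b₂) (ρ + μ) := by simpa using hrep 1 1
  have hT₁ : IsAntiO b₁ ρ T := by simpa using hT 1 0
  have hT₂ : IsAntiO b₂ μ T := by simpa using hT 0 1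
  exact antiO_induced_mixed_identity_general b₁ b₂ ρ μ (hρ.mixed_of_add hμ hadd) T hT₁ hT₂ c s hc hs
end

section
/- Let (𝔤,[-,-]₁,[-,-]₂) be a compatible Lie algebra with a representation (ρ,μ,V), let T : V → 𝔤 be an anti-O-operator associated to (ρ,μ,V), and define u∘v = −ρ(T(u))v and u∗v = −μ(T(u))v on V. Then (V,∘,∗) is a compatible anti-pre-Lie algebra if and only if T is strong, i.e., for all k₁,k₂ ∈ ℂ and all u,v,w ∈ V, (k₁ρ+k₂μ)([T(u),T(v)]_{k})w + (k₁ρ+k₂μ)([T(v),T(w)]_{k})u + (k₁ρ+k₂μ)([T(w),T(u)]_{k})v = 0, where [-,-]_{k} = k₁[-,-]₁ + k₂[-,-]₂. -/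
/-- An anti-pre-Lie algebra structure. -/
def IsAntiPreLie {A : Type*} [AddCommGroup A] [Module ℂ A]
    (m : A →ₗ[ℂ] A →ₗ[ℂ] A) : Prop :=
  (∀ x y z : A, m x (m y z) - m y (m x z) = m (m y x - m x y) z) ∧
  (∀ x y z : A, m (m x y - m y x) z + m (m y z - m z y) x + m (m z x - m x z) y = 0)

/-!
For a single bracket `[-,-]` and the product `u ∘ v = -r(T u)v`, the anti-O-operator equation says
that `T (u ∘ v - v ∘ u) = [T u, T v]`, so `(u ∘ v - v ∘ u) ∘ w = -r([T u, T v])w`. Hence the first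
anti-pre-Lie identity is the representation property of `r` on the image of `T`, and the cyclic
identity is the negative of the strongness condition. The product is linear in `r`, so this
equivalence applies to every member of the pencil.
-/

section AntiOOperator

variable {R g V : Type*} [CommRing R] [AddCommGroup g] [Module R g] [AddCommGroup V] [Module R V]

/-- The anti-pre-Lie identities for a product over a commutative ring; over `ℂ` this unfolds to the
same proposition as `IsAntiPreLie`. -/
def IsAntiPreLieProduct (m : V →ₗ[R] V →ₗ[R] V) : Prop :=
  (∀ x y z : V, m x (m y z) - m y (m x z) = m (m y x - m x y) z) ∧
  (∀ x y z : V, m (m x y - m y x) z + m (m y z - m z y) x + m (m z x - m x z) y = 0)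

/-- `r` carries the product `b`, an arbitrary bilinear map, to commutators of endomorphisms; over
`ℂ` this unfolds to the same proposition as `IsRep`. -/
def IsBracketRep (b : g →ₗ[R] g →ₗ[R] g) (r : g →ₗ[R] V →ₗ[R] V) : Prop :=
  ∀ x y : g, r (b x y) = r x ∘ₗ r y - r y ∘ₗ r x

/-- Anti-O-operators for an arbitrary bilinear product `b` over a commutative ring; over `ℂ` this
unfolds to the same proposition as `IsAntiO`. -/
def IsAntiOOperator (b : g →ₗ[R] g →ₗ[R] g) (r : g →ₗ[R] V →ₗ[R] V) (T : V →ₗ[R] g) : Prop :=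
  ∀ u v : V, b (T u) (T v) = T (r (T v) u - r (T u) v)

/-- The cyclic condition that makes an anti-O-operator strong. It is stated for any linear map `T`,
so that it can be combined with `IsAntiOOperator`. -/
def IsStrong (b : g →ₗ[R] g →ₗ[R] g) (r : g →ₗ[R] V →ₗ[R] V) (T : V →ₗ[R] g) : Prop :=
  ∀ u v w : V, r (b (T u) (T v)) w + r (b (T v) (T w)) u + r (b (T w) (T u)) v = 0

/-- The product `u ∘ v = -r(T u)v` on `V` induced by `T`. -/
def antiOProduct (r : g →ₗ[R] V →ₗ[R] V) (T : V →ₗ[R] g) : V →ₗ[R] V →ₗ[R] V :=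
  -(r ∘ₗ T)

theorem antiOProduct_apply (r : g →ₗ[R] V →ₗ[R] V) (T : V →ₗ[R] g) (u v : V) :
    antiOProduct r T u v = -(r (T u) v) :=
  rfl

theorem antiOProduct_smul_add_smul (k₁ k₂ : R) (ρ μ : g →ₗ[R] V →ₗ[R] V) (T : V →ₗ[R] g) :
    antiOProduct (k₁ • ρ + k₂ • μ) T = k₁ • antiOProduct ρ T + k₂ • antiOProduct μ T := by
  simp only [antiOProduct, LinearMap.add_comp, LinearMap.smul_comp, smul_neg, neg_add]

variable {b : g →ₗ[R] g →ₗ[R] g} {r : g →ₗ[R] V →ₗ[R] V} {T : V →ₗ[R] g}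

theorem IsBracketRep.antiOProduct_sub_antiOProduct (hr : IsBracketRep b r) (x y z : V) :
    antiOProduct r T x (antiOProduct r T y z) - antiOProduct r T y (antiOProduct r T x z) =
      r (b (T x) (T y)) z := by
  simp only [antiOProduct_apply, map_neg, neg_neg, hr (T x) (T y), LinearMap.sub_apply,
    LinearMap.comp_apply]

theorem IsAntiOOperator.map_antiOProduct_sub (hT : IsAntiOOperator b r T) (u v : V) :
    T (antiOProduct r T u v - antiOProduct r T v u) = b (T u) (T v) := by
  rw [hT u v, antiOProduct_apply, antiOProduct_apply, neg_sub_neg]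

theorem IsAntiOOperator.antiOProduct_sub_apply (hT : IsAntiOOperator b r T) (u v w : V) :
    antiOProduct r T (antiOProduct r T u v - antiOProduct r T v u) w =
      -(r (b (T u) (T v)) w) := by
  rw [antiOProduct_apply, hT.map_antiOProduct_sub]

theorem IsAntiOOperator.isAntiPreLieProduct_iff_isStrong (hT : IsAntiOOperator b r T)
    (hr : IsBracketRep b r) : IsAntiPreLieProduct (antiOProduct r T) ↔ IsStrong b r T := by
  have first_identity (x y z : V) :
      antiOProduct r T x (antiOProduct r T y z) - antiOProduct r T y (antiOProduct r T x z) =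
        antiOProduct r T (antiOProduct r T y x - antiOProduct r T x y) z := by
    rw [hT.antiOProduct_sub_apply, ← hr.antiOProduct_sub_antiOProduct, neg_sub]
  rw [IsAntiPreLieProduct, and_iff_right first_identity]
  simp only [hT.antiOProduct_sub_apply, ← neg_add, neg_eq_zero, IsStrong]

theorem antiO_compatible_antiPreLie_iff_strong_general (b₁ b₂ : g →ₗ[R] g →ₗ[R] g)
    (ρ μ : g →ₗ[R] V →ₗ[R] V)
    (hrep : ∀ k₁ k₂ : R, IsBracketRep (k₁ • b₁ + k₂ • b₂) (k₁ • ρ + k₂ • μ))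
    (T : V →ₗ[R] g)
    (hT : ∀ k₁ k₂ : R, IsAntiOOperator (k₁ • b₁ + k₂ • b₂) (k₁ • ρ + k₂ • μ) T)
    (C S : V →ₗ[R] V →ₗ[R] V)
    (hC : ∀ u v : V, C u v = -(ρ (T u) v))
    (hS : ∀ u v : V, S u v = -(μ (T u) v)) :
    (∀ k₁ k₂ : R, IsAntiPreLieProduct (k₁ • C + k₂ • S)) ↔
      ∀ k₁ k₂ : R, IsStrong (k₁ • b₁ + k₂ • b₂) (k₁ • ρ + k₂ • μ) T := by
  obtain rfl : C = antiOProduct ρ T := LinearMap.ext₂ hC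
  obtain rfl : S = antiOProduct μ T := LinearMap.ext₂ hS
  refine forall₂_congr fun k₁ k₂ => ?_
  rw [← antiOProduct_smul_add_smul]
  exact (hT k₁ k₂).isAntiPreLieProduct_iff_isStrong (hrep k₁ k₂)

end AntiOOperator

/-- Let `(g,b₁,b₂)` be a compatible Lie algebra, `(ρ,μ,V)` a
representation, and `T : V → g` an anti-O-operator. With `u∘v = −ρ(T u)v` and
`u∗v = −μ(T u)v` on `V`, `(V,∘,∗)` is a compatible anti-pre-Lie algebra iff `T` is
strong: for all `k₁,k₂` and `u,v,w`,
`(k₁ρ+k₂μ)([Tu,Tv]ₖ)w + (k₁ρ+k₂μ)([Tv,Tw]ₖ)u + (k₁ρ+k₂μ)([Tw,Tu]ₖ)v = 0`. -/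
theorem antiO_compatible_antiPreLie_iff_strong {g V : Type*} [AddCommGroup g]
    [Module ℂ g] [AddCommGroup V] [Module ℂ V]
    (b₁ b₂ : g →ₗ[ℂ] g →ₗ[ℂ] g)
    (hcompat : ∀ k₁ k₂ : ℂ, IsLieBr (k₁ • b₁ + k₂ • b₂))
    (ρ μ : g →ₗ[ℂ] V →ₗ[ℂ] V)
    (hrep : ∀ k₁ k₂ : ℂ, IsRep (k₁ • b₁ + k₂ • b₂) (k₁ • ρ + k₂ • μ))
    (T : V →ₗ[ℂ] g)
    (hT : ∀ k₁ k₂ : ℂ, IsAntiO (k₁ • b₁ + k₂ • b₂) (k₁ • ρ + k₂ • μ) T)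
    (C S : V →ₗ[ℂ] V →ₗ[ℂ] V)
    (hC : ∀ u v : V, C u v = -(ρ (T u) v))
    (hS : ∀ u v : V, S u v = -(μ (T u) v)) :
    (∀ k₁ k₂ : ℂ, IsAntiPreLie (k₁ • C + k₂ • S)) ↔
      (∀ (k₁ k₂ : ℂ) (u v w : V),
        (k₁ • ρ + k₂ • μ) ((k₁ • b₁ + k₂ • b₂) (T u) (T v)) w
          + (k₁ • ρ + k₂ • μ) ((k₁ • b₁ + k₂ • b₂) (T v) (T w)) u
          + (k₁ • ρ + k₂ • μ) ((k₁ • b₁ + k₂ • b₂) (T w) (T u)) v = 0) := by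
  exact antiO_compatible_antiPreLie_iff_strong_general b₁ b₂ ρ μ hrep T hT C S hC hS
end

section
/- Let (𝔤,[-,-]₁,[-,-]₂) be a compatible Lie algebra and R : 𝔤 → 𝔤 a strong anti-Rota-Baxter operator, i.e., for each bracket [-,-]_{k} = k₁[-,-]₁+k₂[-,-]₂ (k₁,k₂ ∈ ℂ) one has [R(x),R(y)]_{k} = R([R(y),x]_{k} + [y,R(x)]_{k}) and [[R(x),R(y)]_{k},z]_{k} + [[R(y),R(z)]_{k},x]_{k} + [[R(z),R(x)]_{k},y]_{k} = 0 for all x,y,z ∈ 𝔤. Then the operations x∘y = −[R(x),y]₁ and x∗y = −[R(x),y]₂ make (𝔤,∘,∗) a compatible anti-pre-Lie algebra. -/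
/-!
Put `m x y = -b (R x) y`. For a skew-symmetric `b`, the anti-Rota-Baxter identity says precisely
that `R` sends the commutator of `m` to the bracket: `R (m x y - m y x) = b (R x) (R y)`. Hence
multiplying by a commutator is acting by `-b (R x) (R y)`. This turns the first anti-pre-Lie
identity into the Jacobi identity for `R x`, `R y`, `z`, and the second one into the strongness of
`R`. Since `m` depends linearly on `b`, this applies along the whole pencil of brackets.
-/

section AntiRotaBaxter

variable {K : Type*} [CommRing K] {g : Type*} [AddCommGroup g] [Module K g]

/-- Lie brackets over a commutative ring, as a predicate on bilinear maps so that several brackets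
can live on one module. As in `IsLieBr`, only skew-symmetry is required, which is weaker than
`b x x = 0` when `g` has `2`-torsion. -/
structure IsLieBracket (b : g →ₗ[K] g →ₗ[K] g) : Prop where
  skew : ∀ x y, b x y = -b y x
  jacobi : ∀ x y z, b (b x y) z + b (b y z) x + b (b z x) y = 0

/-- Anti-pre-Lie products over a commutative ring; over `ℂ` this is `IsAntiPreLie`. -/
structure IsAntiPreLieProduct_s9 (m : g →ₗ[K] g →ₗ[K] g) : Prop where
  left_mul_commutator : ∀ x y z, m x (m y z) - m y (m x z) = m (m y x - m x y) z
  commutator_mul_cyclic : ∀ x y z,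
    m (m x y - m y x) z + m (m y z - m z y) x + m (m z x - m x z) y = 0

/-- Anti-Rota-Baxter operators with respect to a bilinear operation `b`. -/
structure IsAntiRotaBaxter (b : g →ₗ[K] g →ₗ[K] g) (R : g →ₗ[K] g) : Prop where
  bracket_map_map : ∀ x y, b (R x) (R y) = R (b (R y) x + b y (R x))

/-- Strong anti-Rota-Baxter operators, for which the product `-b (R x) y` is anti-pre-Lie
whenever `b` is a Lie bracket. -/
structure IsStrongAntiRotaBaxter (b : g →ₗ[K] g →ₗ[K] g) (R : g →ₗ[K] g) : Prop
    extends IsAntiRotaBaxter b R where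
  strong : ∀ x y z, b (b (R x) (R y)) z + b (b (R y) (R z)) x + b (b (R z) (R x)) y = 0

variable {b m : g →ₗ[K] g →ₗ[K] g} {R : g →ₗ[K] g}

theorem IsLieBracket.leibniz (hb : IsLieBracket b) (x y z : g) :
    b x (b y z) - b y (b x z) = b (b x y) z := by
  have jacobi := hb.jacobi x y z
  rw [hb.skew (b y z) x, hb.skew (b z x) y, hb.skew z x, map_neg, neg_neg] at jacobi
  rw [← sub_eq_zero, ← neg_eq_zero, ← jacobi]
  abel

theorem IsAntiRotaBaxter.map_commutator (hR : IsAntiRotaBaxter b R)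
    (hskew : ∀ x y, b x y = -b y x) (hm : ∀ x y, m x y = -b (R x) y) (x y : g) :
    R (m x y - m y x) = b (R x) (R y) := by
  have commutator_eq : m x y - m y x = b (R y) x + b y (R x) := by
    rw [hm, hm, hskew y (R x)]
    abel
  rw [commutator_eq, hR.bracket_map_map]

theorem IsAntiRotaBaxter.commutator_mul (hR : IsAntiRotaBaxter b R)
    (hskew : ∀ x y, b x y = -b y x) (hm : ∀ x y, m x y = -b (R x) y) (x y z : g) :
    m (m x y - m y x) z = -b (b (R x) (R y)) z := by
  rw [hm, hR.map_commutator hskew hm]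

theorem IsAntiRotaBaxter.left_mul_commutator (hR : IsAntiRotaBaxter b R) (hb : IsLieBracket b)
    (hm : ∀ x y, m x y = -b (R x) y) (x y z : g) :
    m x (m y z) - m y (m x z) = m (m y x - m x y) z :=
  calc
    m x (m y z) - m y (m x z) = b (R x) (b (R y) z) - b (R y) (b (R x) z) := by
      simp only [hm, map_neg, neg_neg]
    _ = b (b (R x) (R y)) z := hb.leibniz (R x) (R y) z
    _ = -b (b (R y) (R x)) z := by
      rw [hb.skew (R x) (R y), map_neg, LinearMap.neg_apply]
    _ = m (m y x - m x y) z := (hR.commutator_mul hb.skew hm y x z).symm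

theorem IsStrongAntiRotaBaxter.commutator_mul_cyclic (hR : IsStrongAntiRotaBaxter b R)
    (hskew : ∀ x y, b x y = -b y x) (hm : ∀ x y, m x y = -b (R x) y) (x y z : g) :
    m (m x y - m y x) z + m (m y z - m z y) x + m (m z x - m x z) y = 0 := by
  simp only [hR.commutator_mul hskew hm]
  rw [← neg_add, ← neg_add, hR.strong, neg_zero]

theorem IsStrongAntiRotaBaxter.isAntiPreLieProduct (hR : IsStrongAntiRotaBaxter b R)
    (hb : IsLieBracket b) (hm : ∀ x y, m x y = -b (R x) y) : IsAntiPreLieProduct_s9 m where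
  left_mul_commutator := hR.left_mul_commutator hb hm
  commutator_mul_cyclic := hR.commutator_mul_cyclic hb.skew hm

theorem strong_antiRotaBaxter_gives_compatible_antiPreLie_general
    {b₁ b₂ C S : g →ₗ[K] g →ₗ[K] g} {R : g →ₗ[K] g}
    (hcompat : ∀ k₁ k₂ : K, IsLieBracket (k₁ • b₁ + k₂ • b₂))
    (hR : ∀ k₁ k₂ : K, IsStrongAntiRotaBaxter (k₁ • b₁ + k₂ • b₂) R)
    (hC : ∀ x y, C x y = -b₁ (R x) y) (hS : ∀ x y, S x y = -b₂ (R x) y) (k₁ k₂ : K) :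
    IsAntiPreLieProduct_s9 (k₁ • C + k₂ • S) := by
  refine (hR k₁ k₂).isAntiPreLieProduct (hcompat k₁ k₂) fun x y => ?_
  simp only [LinearMap.add_apply, LinearMap.smul_apply, hC, hS, smul_neg, neg_add]

end AntiRotaBaxter

theorem isLieBr_iff_isLieBracket {g : Type*} [AddCommGroup g] [Module ℂ g]
    {b : g →ₗ[ℂ] g →ₗ[ℂ] g} : IsLieBr b ↔ IsLieBracket b :=
  ⟨fun h => ⟨h.1, h.2⟩, fun h => ⟨h.skew, h.jacobi⟩⟩

theorem isAntiPreLie_iff_isAntiPreLieProduct {A : Type*} [AddCommGroup A] [Module ℂ A]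
    {m : A →ₗ[ℂ] A →ₗ[ℂ] A} : IsAntiPreLie m ↔ IsAntiPreLieProduct_s9 m :=
  ⟨fun h => ⟨h.1, h.2⟩, fun h => ⟨h.left_mul_commutator, h.commutator_mul_cyclic⟩⟩

/-- Let `(g,b₁,b₂)` be a compatible Lie algebra and `R` a strong
anti-Rota-Baxter operator (for every bracket `bₖ = k₁b₁+k₂b₂`). Then
`x∘y = −[Rx,y]₁`, `x∗y = −[Rx,y]₂` define a compatible anti-pre-Lie algebra. -/
theorem strong_antiRotaBaxter_gives_compatible_antiPreLie {g : Type*} [AddCommGroup g]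
    [Module ℂ g] (b₁ b₂ : g →ₗ[ℂ] g →ₗ[ℂ] g)
    (hcompat : ∀ k₁ k₂ : ℂ, IsLieBr (k₁ • b₁ + k₂ • b₂))
    (R : g →ₗ[ℂ] g)
    (hR : ∀ (k₁ k₂ : ℂ) (x y : g),
      (k₁ • b₁ + k₂ • b₂) (R x) (R y)
        = R ((k₁ • b₁ + k₂ • b₂) (R y) x + (k₁ • b₁ + k₂ • b₂) y (R x)))
    (hstrong : ∀ (k₁ k₂ : ℂ) (x y z : g),
      (k₁ • b₁ + k₂ • b₂) ((k₁ • b₁ + k₂ • b₂) (R x) (R y)) z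
        + (k₁ • b₁ + k₂ • b₂) ((k₁ • b₁ + k₂ • b₂) (R y) (R z)) x
        + (k₁ • b₁ + k₂ • b₂) ((k₁ • b₁ + k₂ • b₂) (R z) (R x)) y = 0)
    (C S : g →ₗ[ℂ] g →ₗ[ℂ] g)
    (hC : ∀ x y : g, C x y = -(b₁ (R x) y))
    (hS : ∀ x y : g, S x y = -(b₂ (R x) y)) :
    ∀ k₁ k₂ : ℂ, IsAntiPreLie (k₁ • C + k₂ • S) := by
  exact fun k₁ k₂ => isAntiPreLie_iff_isAntiPreLieProduct.2 <|
    strong_antiRotaBaxter_gives_compatible_antiPreLie_general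
      (fun l₁ l₂ => isLieBr_iff_isLieBracket.1 (hcompat l₁ l₂))
      (fun l₁ l₂ => ⟨⟨hR l₁ l₂⟩, hstrong l₁ l₂⟩) hC hS k₁ k₂
end

section
/- Let (𝔤,[-,-]₁,[-,-]₂) be a compatible Lie algebra and R : 𝔤 → 𝔤 a linear map such that the operations x∘y = −[R(x),y]₁ and x∗y = −[R(x),y]₂ make (𝔤,∘,∗) a compatible anti-pre-Lie algebra. Then for every k₁,k₂ ∈ ℂ, writing [-,-]_{k} = k₁[-,-]₁+k₂[-,-]₂, R satisfies [[R(x),R(y)]_{k},z]_{k} + [[R(y),R(z)]_{k},x]_{k} + [[R(z),R(x)]_{k},y]_{k} = 0 and [[R(x),R(y)]_{k} + R([x,R(y)]_{k} + [R(x),y]_{k}), z]_{k} = 0 for all x,y,z ∈ 𝔤. -/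
/-! Write `x ∗ y = −[R x, y]`. Left multiplication by `x` is `−ad (R x)`, so the first anti-pre-Lie
law says `[ad (R x), ad (R y)] = ad (R (x ∗ y − y ∗ x))`. By the Jacobi identity the left side is
`ad [R x, R y]`; hence `[R x, R y]` and `R (x ∗ y − y ∗ x) = −R ([x, R y] + [R x, y])` differ by a
central element, and the second anti-pre-Lie law becomes the cyclic identity for
`[[R x, R y], z]`. -/

section Bracket

variable {K g : Type*} [CommRing K] [AddCommGroup g] [Module K g]
  {b m : g →ₗ[K] g →ₗ[K] g} {R : g →ₗ[K] g}

theorem bracket_bracket_of_jacobi (skew : ∀ x y, b x y = -b y x)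
    (jacobi : ∀ x y z, b (b x y) z + b (b y z) x + b (b z x) y = 0) (x y z : g) :
    b (b x y) z = b x (b y z) - b y (b x z) := by
  have h := jacobi x y z
  rw [skew (b y z) x, skew (b z x) y, skew z x, map_neg, neg_neg] at h
  rw [← sub_eq_zero, ← h]
  abel

theorem bracket_map_map_eq_neg_mul_commutator (skew : ∀ x y, b x y = -b y x)
    (jacobi : ∀ x y z, b (b x y) z + b (b y z) x + b (b z x) y = 0)
    (hm : ∀ x y, m x y = -b (R x) y)
    (commutator_law : ∀ x y z, m x (m y z) - m y (m x z) = m (m y x - m x y) z) (x y z : g) :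
    b (b (R x) (R y)) z = -m (m x y - m y x) z :=
  calc b (b (R x) (R y)) z
    _ = b (R x) (b (R y) z) - b (R y) (b (R x) z) :=
      bracket_bracket_of_jacobi skew jacobi (R x) (R y) z
    _ = m x (m y z) - m y (m x z) := by
      simp only [hm, map_neg, neg_neg]
    _ = m (m y x - m x y) z := commutator_law x y z
    _ = -m (m x y - m y x) z := by
      rw [← neg_sub, map_neg, LinearMap.neg_apply]

theorem commutator_eq_neg_bracket_map_add (skew : ∀ x y, b x y = -b y x)
    (hm : ∀ x y, m x y = -b (R x) y) (x y : g) :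
    m x y - m y x = -(b x (R y) + b (R x) y) := by
  rw [hm, hm, skew x (R y)]
  abel

theorem compatible_antiPreLie_from_R_implies_strong_general (skew : ∀ x y, b x y = -b y x)
    (jacobi : ∀ x y z, b (b x y) z + b (b y z) x + b (b z x) y = 0)
    (hm : ∀ x y, m x y = -b (R x) y)
    (commutator_law : ∀ x y z, m x (m y z) - m y (m x z) = m (m y x - m x y) z)
    (cyclic_law : ∀ x y z,
      m (m x y - m y x) z + m (m y z - m z y) x + m (m z x - m x z) y = 0) (x y z : g) :
    (b (b (R x) (R y)) z + b (b (R y) (R z)) x + b (b (R z) (R x)) y = 0) ∧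
      b (b (R x) (R y) + R (b x (R y) + b (R x) y)) z = 0 := by
  have bracket_map_map := bracket_map_map_eq_neg_mul_commutator skew jacobi hm commutator_law
  constructor
  · simp only [bracket_map_map, ← neg_add, cyclic_law, neg_zero]
  · calc b (b (R x) (R y) + R (b x (R y) + b (R x) y)) z
      _ = -m (m x y - m y x) z + b (R (b x (R y) + b (R x) y)) z := by
        rw [map_add, LinearMap.add_apply, bracket_map_map]
      _ = -m (m x y - m y x) z + m (-(b x (R y) + b (R x) y)) z := by
        rw [hm (-_), map_neg, map_neg, LinearMap.neg_apply, neg_neg]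
      _ = 0 := by
        rw [commutator_eq_neg_bracket_map_add skew hm, neg_add_cancel]

end Bracket

/-- Let `(g,b₁,b₂)` be a compatible Lie algebra and `R : g → g` a linear
map such that `x∘y = −[Rx,y]₁`, `x∗y = −[Rx,y]₂` define a compatible anti-pre-Lie
algebra. Then for every `k₁,k₂`, writing `bₖ = k₁b₁+k₂b₂`, `R` satisfies the strong
condition `[[Rx,Ry]ₖ,z]ₖ + [[Ry,Rz]ₖ,x]ₖ + [[Rz,Rx]ₖ,y]ₖ = 0` and
`[[Rx,Ry]ₖ + R([x,Ry]ₖ + [Rx,y]ₖ), z]ₖ = 0`. -/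
theorem compatible_antiPreLie_from_R_implies_strong {g : Type*} [AddCommGroup g]
    [Module ℂ g] (b₁ b₂ : g →ₗ[ℂ] g →ₗ[ℂ] g)
    (hcompat : ∀ k₁ k₂ : ℂ, IsLieBr (k₁ • b₁ + k₂ • b₂))
    (R : g →ₗ[ℂ] g)
    (C S : g →ₗ[ℂ] g →ₗ[ℂ] g)
    (hC : ∀ x y : g, C x y = -(b₁ (R x) y))
    (hS : ∀ x y : g, S x y = -(b₂ (R x) y))
    (hAPL : ∀ k₁ k₂ : ℂ, IsAntiPreLie (k₁ • C + k₂ • S)) :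
    ∀ (k₁ k₂ : ℂ) (x y z : g),
      ((k₁ • b₁ + k₂ • b₂) ((k₁ • b₁ + k₂ • b₂) (R x) (R y)) z
          + (k₁ • b₁ + k₂ • b₂) ((k₁ • b₁ + k₂ • b₂) (R y) (R z)) x
          + (k₁ • b₁ + k₂ • b₂) ((k₁ • b₁ + k₂ • b₂) (R z) (R x)) y = 0) ∧
      ((k₁ • b₁ + k₂ • b₂)
          ((k₁ • b₁ + k₂ • b₂) (R x) (R y)
            + R ((k₁ • b₁ + k₂ • b₂) x (R y) + (k₁ • b₁ + k₂ • b₂) (R x) y)) z = 0) := by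
  intro k₁ k₂
  have hm (x y : g) : (k₁ • C + k₂ • S) x y = -(k₁ • b₁ + k₂ • b₂) (R x) y := by
    simp only [LinearMap.add_apply, LinearMap.smul_apply, hC, hS, smul_neg, neg_add]
  exact compatible_antiPreLie_from_R_implies_strong_general (hcompat k₁ k₂).1 (hcompat k₁ k₂).2 hm
    (hAPL k₁ k₂).1 (hAPL k₁ k₂).2
end

section
/- Let (𝔤,[-,-]₁,[-,-]₂) be a compatible Lie algebra and (ρ,μ,V) a representation of it. If T : V → 𝔤 is an invertible (bijective) anti-O-operator associated to (ρ,μ,V), then T is strong: for all k₁,k₂ ∈ ℂ and all u,v,w ∈ V, (k₁ρ+k₂μ)([T(u),T(v)]_{k})w + (k₁ρ+k₂μ)([T(v),T(w)]_{k})u + (k₁ρ+k₂μ)([T(w),T(u)]_{k})v = 0, where [-,-]_{k} = k₁[-,-]₁+k₂[-,-]₂. -/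
/-! Applying the anti-O-operator identity twice expresses `[[Tu, Tv], Tw]` through `T` and the
action. In the cyclic sum the iterated actions recombine, because the action is a representation,
into minus the cyclic sum of `[Tu, Tv] · w`; hence the Jacobiator of `Tu, Tv, Tw` is `-2 T` of that
sum. By the Jacobi identity it vanishes, and injectivity of `T` and regularity of `2` leave the
cyclic sum itself zero. -/

section AntiOOperator

variable {R g V : Type*} [CommRing R] [AddCommGroup g] [Module R g] [AddCommGroup V] [Module R V]
  {b : g →ₗ[R] g →ₗ[R] g} {r : g →ₗ[R] V →ₗ[R] V} {T : V →ₗ[R] g}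

theorem cyclic_sum_comp_sub_eq_neg_cyclic_sum_bracket
    (hrep : ∀ x y, r (b x y) = r x ∘ₗ r y - r y ∘ₗ r x) (x y z : g) (u v w : V) :
    (r z (r y u) - r z (r x v)) + (r x (r z v) - r x (r y w)) + (r y (r x w) - r y (r z u)) =
      -(r (b x y) w + r (b y z) u + r (b z x) v) := by
  simp only [hrep, LinearMap.sub_apply, LinearMap.comp_apply]
  abel

theorem antiO_bracket_bracket_eq_map (hT : ∀ u v, b (T u) (T v) = T (r (T v) u - r (T u) v))
    (u v w : V) :
    b (b (T u) (T v)) (T w) =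
      T (r (T w) (r (T v) u) - r (T w) (r (T u) v) - r (b (T u) (T v)) w) := by
  calc b (b (T u) (T v)) (T w)
      = b (T (r (T v) u - r (T u) v)) (T w) := by rw [hT u v]
    _ = T (r (T w) (r (T v) u - r (T u) v) - r (T (r (T v) u - r (T u) v)) w) := hT _ w
    _ = T (r (T w) (r (T v) u) - r (T w) (r (T u) v) - r (b (T u) (T v)) w) := by
      rw [map_sub (r (T w)), ← hT u v]

theorem antiO_jacobiator_eq_neg_map_two_smul (hrep : ∀ x y, r (b x y) = r x ∘ₗ r y - r y ∘ₗ r x)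
    (hT : ∀ u v, b (T u) (T v) = T (r (T v) u - r (T u) v)) (u v w : V) :
    b (b (T u) (T v)) (T w) + b (b (T v) (T w)) (T u) + b (b (T w) (T u)) (T v) =
      -T ((2 : R) • (r (b (T u) (T v)) w + r (b (T v) (T w)) u + r (b (T w) (T u)) v)) := by
  have hcyc := cyclic_sum_comp_sub_eq_neg_cyclic_sum_bracket hrep (T u) (T v) (T w) u v w
  rw [antiO_bracket_bracket_eq_map hT u v w, antiO_bracket_bracket_eq_map hT v w u,
    antiO_bracket_bracket_eq_map hT w u v, ← map_add, ← map_add, ← map_neg,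
    sub_add_sub_comm, sub_add_sub_comm, hcyc]
  congr 1
  module

theorem invertible_antiO_is_strong_general
    (hjacobi : ∀ x y z, b (b x y) z + b (b y z) x + b (b z x) y = 0)
    (hrep : ∀ x y, r (b x y) = r x ∘ₗ r y - r y ∘ₗ r x)
    (hT : ∀ u v, b (T u) (T v) = T (r (T v) u - r (T u) v))
    (hinj : Function.Injective T) (htwo : IsSMulRegular V (2 : R)) (u v w : V) :
    r (b (T u) (T v)) w + r (b (T v) (T w)) u + r (b (T w) (T u)) v = 0 := by
  apply htwo.right_eq_zero_of_smul
  rw [← map_eq_zero_iff T hinj, ← neg_eq_zero, ← antiO_jacobiator_eq_neg_map_two_smul hrep hT]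
  exact hjacobi (T u) (T v) (T w)

end AntiOOperator

/-- An invertible anti-O-operator of a compatible Lie algebra
`(g,b₁,b₂)` associated to a representation `(ρ,μ,V)` is strong: for all `k₁,k₂` and
`u,v,w`, `(k₁ρ+k₂μ)([Tu,Tv]ₖ)w + (k₁ρ+k₂μ)([Tv,Tw]ₖ)u + (k₁ρ+k₂μ)([Tw,Tu]ₖ)v = 0`. -/
theorem invertible_antiO_is_strong {g V : Type*} [AddCommGroup g] [Module ℂ g]
    [AddCommGroup V] [Module ℂ V]
    (b₁ b₂ : g →ₗ[ℂ] g →ₗ[ℂ] g)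
    (hcompat : ∀ k₁ k₂ : ℂ, IsLieBr (k₁ • b₁ + k₂ • b₂))
    (ρ μ : g →ₗ[ℂ] V →ₗ[ℂ] V)
    (hrep : ∀ k₁ k₂ : ℂ, IsRep (k₁ • b₁ + k₂ • b₂) (k₁ • ρ + k₂ • μ))
    (T : V →ₗ[ℂ] g)
    (hT : ∀ k₁ k₂ : ℂ, IsAntiO (k₁ • b₁ + k₂ • b₂) (k₁ • ρ + k₂ • μ) T)
    (hinv : Function.Bijective T) :
    ∀ (k₁ k₂ : ℂ) (u v w : V),
      (k₁ • ρ + k₂ • μ) ((k₁ • b₁ + k₂ • b₂) (T u) (T v)) w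
        + (k₁ • ρ + k₂ • μ) ((k₁ • b₁ + k₂ • b₂) (T v) (T w)) u
        + (k₁ • ρ + k₂ • μ) ((k₁ • b₁ + k₂ • b₂) (T w) (T u)) v = 0 := by
  intro k₁ k₂
  exact invertible_antiO_is_strong_general (hcompat k₁ k₂).2 (hrep k₁ k₂) (hT k₁ k₂) hinv.injective
    (.of_ne_zero two_ne_zero)
end
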